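/- For every cardinal number α ≥ 𝔠, there exists a metrizable topological space X with |X| = α such that every quasiordered set (Q, ≤) with |Q| ≤ α has a representation by clopen subspaces of X with respect to embeddability; that is, there is a family {X(q) : q ∈ Q} of pairwise non-homeomorphic clopen subsets of X such that q ≤ q' if and only if X(q) is homeomorphicenable to a subspace of X(q') (i.e., there exists a topological embedding of X(q) into X(q')). -/

import Mathlib

universe u

open Cardinal

/-- `A` is homeomorphic to a (not necessarily special) subspace of `B`, i.e. there is a
topological embedding of `A` into `B`. -/
def HomeoToSubspace (A : Type*) [TopologicalSpace A]
    (B : Type*) [TopologicalSpace B] : Prop :=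
  ∃ t : Set B, Nonempty (A ≃ₜ t)

/-- The representation property of the space `X` for a quasiorder, with respect to
embeddability. -/
def RepresentsByEmb (α : Cardinal.{u}) (X : Type u) [TopologicalSpace X] : Prop :=
  ∀ (Q : Type u) (le : Q → Q → Prop), #Q ≤ α →
    (∀ q, le q q) → (∀ a b c, le a b → le b c → le a c) →
    ∃ Xq : Q → Set X,
      (∀ q, IsClopen (Xq q)) ∧
      (∀ q q', q ≠ q' → IsEmpty ((Xq q) ≃ₜ (Xq q'))) ∧
      (∀ q q', le q q' ↔ HomeoToSubspace (Xq q) (Xq q'))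

set_option linter.unusedSectionVars false

namespace QRep

section Plumb

open scoped BoundedContinuousFunction
open Set Topology

variable {V : Type u} [TopologicalSpace V] [DiscreteTopology V]

/-- Index set of coordinates: vertices and ordered pairs of vertices. -/
abbrev JJ (V : Type u) := V ⊕ (V × V)

/-- The ambient metric space. -/
abbrev ZZ (V : Type u) [TopologicalSpace V] := JJ V →ᵇ ℂ

open Classical in
/-- Basis vectors. -/
noncomputable def dl (j : JJ V) : ZZ V :=
  BoundedContinuousFunction.ofNormedAddCommGroupDiscrete (fun i => if i = j then (1 : ℂ) else 0) 1
    (by intro i; split_ifs <;> simp)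

open Classical in
lemma dl_apply (j i : JJ V) : dl j i = if i = j then (1 : ℂ) else 0 := rfl

/-- The parametrised cell (a plane) joining the vertices `u` and `v`. -/
noncomputable def gg (u v : V) (p : ℂ) : ZZ V :=
  (1 - p) • dl (Sum.inl u) + p • dl (Sum.inl v) + (p * (1 - p)) • dl (Sum.inr (u, v))

lemma continuous_gg (u v : V) : Continuous (gg u v) := by
  unfold gg; fun_prop

open Classical in
lemma gg_inl (u v w : V) (p : ℂ) : gg u v p (Sum.inl w) =
    (1 - p) * (if w = u then 1 else 0) + p * (if w = v then 1 else 0) := by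
  simp [gg, dl_apply]

open Classical in
lemma gg_inr (u v a b : V) (p : ℂ) : gg u v p (Sum.inr (a, b)) =
    if a = u ∧ b = v then p * (1 - p) else 0 := by
  simp [gg, dl_apply]

lemma gg_left {u v : V} (h : u ≠ v) (p : ℂ) : gg u v p (Sum.inl u) = 1 - p := by
  simp [gg_inl, h]

lemma gg_right {u v : V} (h : u ≠ v) (p : ℂ) : gg u v p (Sum.inl v) = p := by
  simp [gg_inl, h.symm]

lemma gg_mid (u v : V) (p : ℂ) : gg u v p (Sum.inr (u, v)) = p * (1 - p) := by
  simp [gg_inr]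

lemma gg_inl_ne {u v w : V} {p : ℂ} (h : gg u v p (Sum.inl w) ≠ 0) : w = u ∨ w = v := by
  by_contra hc
  push Not at hc
  simp [gg_inl, hc.1, hc.2] at h

lemma gg_inr_ne {u v a b : V} {p : ℂ} (h : gg u v p (Sum.inr (a, b)) ≠ 0) :
    a = u ∧ b = v ∧ p ≠ 0 ∧ p ≠ 1 := by
  rw [gg_inr] at h
  split_ifs at h with h1
  · refine ⟨h1.1, h1.2, ?_, ?_⟩
    · rintro rfl; simp at h
    · rintro rfl; simp at h
  · simp at h

lemma gg_injective {u v : V} (h : u ≠ v) : Function.Injective (gg u v) := by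
  intro p q hpq
  rw [← gg_right h p, hpq, gg_right h]

lemma gg_zero (u v : V) : gg u v 0 = dl (Sum.inl u) := by simp [gg]

lemma gg_one (u v : V) : gg u v 1 = dl (Sum.inl v) := by simp [gg]

lemma dl_inj {a b : V} (h : (dl (Sum.inl a) : ZZ V) = dl (Sum.inl b)) : a = b := by
  have := congrArg (fun x : ZZ V => x (Sum.inl a)) h
  by_contra hc
  simp [dl_apply, hc] at this

lemma isOpen_coord (j : JJ V) : IsOpen {x : ZZ V | x j ≠ 0} := by
  have : Continuous (fun x : ZZ V => x j) := continuous_eval_const j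
  exact isOpen_ne.preimage this

/-- The space with cell parameter sets `D`. -/
def XD (D : V → V → Set ℂ) : Set (ZZ V) := {x | ∃ u v p, p ∈ D u v ∧ x = gg u v p}

lemma dl_mem_range {a u v : V} {p : ℂ} (h : gg u v p = dl (Sum.inl a)) : a = u ∨ a = v := by
  apply gg_inl_ne (p := p)
  rw [h]; simp [dl_apply]

/-- Blocks map into blocks. -/
lemma block {D : V → V → Set ℂ} (hD : ∀ u v, (D u v).Nonempty → u ≠ v)
    {h : ℂ → ZZ V} (hc : Continuous h) (hi : Function.Injective h) (hX : ∀ z, h z ∈ XD D) :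
    ∃ u v, (D u v).Nonempty ∧ ∀ z, h z ∈ range (gg u v) := by
  -- some point is not a vertex
  have h1 : ∃ z u v, h z (Sum.inr (u, v)) ≠ 0 := by
    by_contra hcon
    push Not at hcon
    have hv : ∀ z, ∃ a, h z = dl (Sum.inl a) := by
      intro z
      obtain ⟨u, v, p, hp, hz⟩ := hX z
      have := hcon z u v
      rw [hz, gg_mid, mul_eq_zero] at this
      rcases this with h0 | h0
      · exact ⟨u, by rw [hz, h0, gg_zero]⟩
      · exact ⟨v, by rw [hz, ← gg_one u v]; congr 1; linear_combination -h0⟩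
    obtain ⟨a, ha⟩ := hv 0
    have hca : Continuous (fun z => h z (Sum.inl a)) :=
      (continuous_eval_const (Sum.inl a : JJ V)).comp hc
    have hpre := isPreconnected_univ (α := ℂ)
    rw [isPreconnected_iff_subset_of_disjoint] at hpre
    have := hpre {z | h z (Sum.inl a) ≠ 0} {z | h z (Sum.inl a) ≠ 1}
      (isOpen_ne.preimage hca) (isOpen_ne.preimage hca) ?_ ?_
    · rcases this with h2 | h2
      · have h3 := h2 (mem_univ (1 : ℂ))
        obtain ⟨b, hb⟩ := hv 1
        have hab : a = b := by
          by_contra hne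
          apply h3
          rw [hb]; simp [dl_apply, hne]
        rw [← hab, ← ha] at hb
        exact one_ne_zero (hi hb)
      · exact h2 (mem_univ (0 : ℂ)) (by rw [ha]; simp [dl_apply])
    · intro z _
      by_cases h0 : h z (Sum.inl a) = 0
      · right; simp [h0]
      · left; exact h0
    · ext z
      simp only [mem_inter_iff, mem_univ, mem_ofPred_eq, true_and, mem_empty_iff_false, iff_false]
      rintro ⟨h2, h3⟩
      obtain ⟨b, hb⟩ := hv z
      rw [hb, dl_apply] at h2 h3
      split_ifs at h2 h3 <;> simp at h2 h3
  obtain ⟨z0, u, v, hz0⟩ := h1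
  have hcell : ∀ z, h z (Sum.inr (u, v)) ≠ 0 → ∃ p ∈ D u v, h z = gg u v p := by
    intro z hz
    obtain ⟨u', v', p, hp, hzz⟩ := hX z
    rw [hzz] at hz
    obtain ⟨rfl, rfl, -⟩ := gg_inr_ne hz
    exact ⟨p, hp, hzz⟩
  obtain ⟨p0, hp0, -⟩ := hcell z0 hz0
  have huv := hD u v ⟨p0, hp0⟩
  refine ⟨u, v, ⟨p0, hp0⟩, ?_⟩
  set K : Set ℂ := h ⁻¹' {dl (Sum.inl u), dl (Sum.inl v)} with hK
  have hKc : K.Countable := (Set.Finite.preimage hi.injOn (by simp)).countable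
  have hconn : IsPreconnected Kᶜ := by
    refine (hKc.isConnected_compl_of_one_lt_rank ?_).isPreconnected
    rw [Complex.rank_real_complex]; norm_num
  rw [isPreconnected_iff_subset_of_disjoint] at hconn
  have hcont : ∀ j : JJ V, IsOpen {z | h z j ≠ 0} := fun j => (isOpen_coord j).preimage hc
  have := hconn {z | h z (Sum.inr (u, v)) ≠ 0}
    (⋃ j ∈ {j : JJ V | j ≠ Sum.inl u ∧ j ≠ Sum.inl v ∧ j ≠ Sum.inr (u, v)}, {z | h z j ≠ 0})
    (hcont _) (isOpen_biUnion fun j _ => hcont j) ?_ ?_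
  · intro z
    by_cases hz : z ∈ K
    · rcases hz with hz | hz
      · exact ⟨0, by rw [gg_zero, hz]⟩
      · exact ⟨1, by rw [gg_one]; exact hz.symm⟩
    · have hz0K : z0 ∈ Kᶜ := by
        rintro (h2 | h2)
        · rw [h2] at hz0; simp [dl_apply] at hz0
        · rw [mem_singleton_iff.1 h2] at hz0; simp [dl_apply] at hz0
      rcases this with h2 | h2
      · obtain ⟨p, _, hp⟩ := hcell z (h2 hz)
        exact ⟨p, hp.symm⟩
      · exfalso
        obtain ⟨p, _, hp⟩ := hcell z0 hz0
        have h3 := h2 hz0K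
        simp only [mem_ofPred_eq, mem_iUnion, exists_prop] at h3
        obtain ⟨j, ⟨hj1, hj2, hj3⟩, hj⟩ := h3
        rw [hp] at hj
        rcases j with w | ⟨a, b⟩
        · rcases gg_inl_ne hj with rfl | rfl <;> simp at hj1 hj2
        · obtain ⟨rfl, rfl, -⟩ := gg_inr_ne hj; simp at hj3
  · intro z hz
    by_cases h0 : h z (Sum.inr (u, v)) = 0
    · right
      simp only [mem_ofPred_eq, mem_iUnion, exists_prop]
      obtain ⟨u', v', p, hp, hzz⟩ := hX z
      have huv' := hD u' v' ⟨p, hp⟩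
      have hzK : ¬ (h z = dl (Sum.inl u) ∨ h z = dl (Sum.inl v)) := hz
      push Not at hzK
      by_cases hp0 : p = 0
      · subst hp0
        rw [gg_zero] at hzz
        refine ⟨Sum.inl u', ⟨?_, ?_, by simp⟩, by rw [hzz]; simp [dl_apply]⟩
        · rintro h4; exact hzK.1 (by rw [hzz, h4])
        · rintro h4; exact hzK.2 (by rw [hzz, h4])
      by_cases hp1 : p = 1
      · subst hp1
        rw [gg_one] at hzz
        refine ⟨Sum.inl v', ⟨?_, ?_, by simp⟩, by rw [hzz]; simp [dl_apply]⟩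
        · rintro h4; exact hzK.1 (by rw [hzz, h4])
        · rintro h4; exact hzK.2 (by rw [hzz, h4])
      have hm : h z (Sum.inr (u', v')) ≠ 0 := by
        rw [hzz, gg_mid]
        exact mul_ne_zero hp0 (sub_ne_zero.2 (Ne.symm hp1))
      refine ⟨Sum.inr (u', v'), ⟨by simp, by simp, ?_⟩, hm⟩
      intro h4
      rw [h4] at hm
      exact hm h0
    · left; exact h0
  · ext z
    simp only [mem_inter_iff, mem_ofPred_eq, mem_iUnion, exists_prop, mem_empty_iff_false, iff_false]
    rintro ⟨-, h2, j, ⟨hj1, hj2, hj3⟩, hj⟩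
    obtain ⟨p, _, hp⟩ := hcell z h2
    rw [hp] at hj
    rcases j with w | ⟨a, b⟩
    · rcases gg_inl_ne hj with rfl | rfl <;> simp at hj1 hj2
    · obtain ⟨rfl, rfl, -⟩ := gg_inr_ne hj; simp at hj3

/-- A fat vertex cannot be sent to a point with a neighbourhood inside a single cell. -/
lemma fat {D : V → V → Set ℂ} (hD : ∀ u v, (D u v).Nonempty → u ≠ v) {φ : XD D → ZZ V}
    (hφ : IsEmbedding φ) {v : V} (hv : ¬ {w | D v w = Set.univ}.Countable)
    (hx : dl (Sum.inl v) ∈ XD D)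
    {O : Set (ZZ V)} (hO : IsOpen O) (hxO : φ ⟨_, hx⟩ ∈ O) {a b : V}
    (hab : ∀ x, φ x ∈ O → φ x ∈ range (gg a b)) : False := by
  have hsep : TopologicalSpace.IsSeparable (φ ⁻¹' (range (gg a b))) :=
    hφ.isSeparable_preimage (TopologicalSpace.isSeparable_range (continuous_gg a b))
  obtain ⟨c, hc, hcl⟩ := hsep
  have key : ∀ w ∈ {w | D v w = Set.univ}, ∃ x ∈ c, x.1 (Sum.inr (v, w)) ≠ 0 := by
    intro w hw
    have hw : D v w = Set.univ := hw
    have hvw : v ≠ w := hD v w (by rw [hw]; exact univ_nonempty)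
    let G : ℂ → XD D := fun p => ⟨gg v w p, v, w, p, by rw [hw]; trivial, rfl⟩
    have hG : Continuous G := (continuous_gg v w).subtype_mk _
    have hG0 : G 0 = ⟨_, hx⟩ := Subtype.ext (gg_zero v w)
    have hU : IsOpen (G ⁻¹' (φ ⁻¹' O)) := (hO.preimage hφ.continuous).preimage hG
    have h0 : (0 : ℂ) ∈ G ⁻¹' (φ ⁻¹' O) := by
      change φ (G 0) ∈ O
      rw [hG0]; exact hxO
    have hOU : IsOpen (φ ⁻¹' O ∩ {x : XD D | x.1 (Sum.inr (v, w)) ≠ 0}) :=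
      (hO.preimage hφ.continuous).inter ((isOpen_coord _).preimage continuous_subtype_val)
    have hne : ∃ p ∈ G ⁻¹' (φ ⁻¹' O), p ≠ 0 ∧ p ≠ 1 := by
      have hfin : ({0, 1} : Set ℂ).Countable := by simp
      obtain ⟨p, hp1, hp2⟩ := (hfin.dense_compl ℝ).inter_open_nonempty _ hU ⟨0, h0⟩
      refine ⟨p, hp1, ?_, ?_⟩ <;> rintro rfl <;> simp at hp2
    obtain ⟨p, hp, hp0, hp1⟩ := hne
    have hmem : G p ∈ φ ⁻¹' O ∩ {x : XD D | x.1 (Sum.inr (v, w)) ≠ 0} := by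
      refine ⟨hp, ?_⟩
      change gg v w p _ ≠ 0
      rw [gg_mid]
      exact mul_ne_zero hp0 (sub_ne_zero.2 (Ne.symm hp1))
    have hclos : G p ∈ closure c := hcl (hab _ hp)
    obtain ⟨x, hx1, hx2⟩ := mem_closure_iff.1 hclos _ hOU hmem
    exact ⟨x, hx2, hx1.2⟩
  have : Nonempty (XD D) := ⟨⟨_, hx⟩⟩
  choose! F hF using key
  apply hv
  refine MapsTo.countable_of_injOn (f := F) (fun w hw => (hF w hw).1) ?_ hc
  intro w hw w' hw' hww
  have h1 := (hF w hw).2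
  have h2 := (hF w' hw').2
  rw [← hww] at h2
  obtain ⟨u, z, p, hp, hx⟩ := (F w).2
  rw [hx] at h1 h2
  obtain ⟨-, rfl, -⟩ := gg_inr_ne h1
  obtain ⟨-, rfl, -⟩ := gg_inr_ne h2
  rfl

end Plumb

end QRep
namespace QRep

section Ladder

open Set

variable {A : Type u} [LinearOrder A]

/-- `l` is the supremum of a strictly increasing sequence. -/
def Lad (l : A) : Prop := ∃ s : ℕ → A, StrictMono s ∧ IsLUB (range s) l

/-- A chosen ladder. -/
noncomputable def lad (l : {l : A // Lad l}) : ℕ → A := l.2.choose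

lemma lad_mono (l : {l : A // Lad l}) : StrictMono (lad l) := l.2.choose_spec.1

lemma lad_lub (l : {l : A // Lad l}) : IsLUB (range (lad l)) l.1 := l.2.choose_spec.2

lemma lad_lt (l : {l : A // Lad l}) (n : ℕ) : lad l n < l.1 :=
  (lad_mono l (Nat.lt_succ_self n)).trans_le ((lad_lub l).1 ⟨_, rfl⟩)

lemma rigid [WellFoundedLT A] [OrderTop A] {f : A → A} (hf : StrictMono f)
    (hl : ∀ l : {l : A // Lad l}, ∃ l' : {l : A // Lad l}, f l.1 = l'.1 ∧
      ∀ n, f (lad l n) = lad l' n) (x : A) : f x = x := by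
  by_contra hx
  have hle : ∀ y, y ≤ f y := fun y => hf.le_apply
  have hlt : x < f x := lt_of_le_of_ne (hle x) (Ne.symm hx)
  set s : ℕ → A := fun n => f^[n] x with hs
  have hss : ∀ n, s (n + 1) = f (s n) := fun n => Function.iterate_succ_apply' f n x
  have hsm : StrictMono s := by
    apply strictMono_nat_of_lt_succ
    intro n
    induction n with
    | zero => simpa [hs] using hlt
    | succ n ih => rw [hss (n + 1)]; nth_rewrite 1 [hss n]; exact hf ih
  have hne : (upperBounds (range s)).Nonempty := ⟨⊤, fun _ _ => le_top⟩
  obtain ⟨m, hm, hmin⟩ := WellFounded.has_min (wellFounded_lt (α := A)) _ hne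
  have hlub : IsLUB (range s) m := ⟨hm, fun y hy => not_lt.1 (hmin y hy)⟩
  let l : {l : A // Lad l} := ⟨m, s, hsm, hlub⟩
  have hsl : ∀ n, s n < m := fun n => (hsm (Nat.lt_succ_self n)).trans_le (hlub.1 ⟨_, rfl⟩)
  obtain ⟨l', hl1, hl2⟩ := hl l
  have hl1 : f m = l'.1 := hl1
  have hfix : f m = m := by
    apply le_antisymm _ (hle m)
    rw [hl1]
    apply (lad_lub l').2
    rintro _ ⟨n, rfl⟩
    rw [← hl2 n]
    have h1 : lad l n < m := lad_lt l n
    obtain ⟨_, ⟨k, rfl⟩, hk⟩ := (lt_isLUB_iff hlub).1 h1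
    have := hf hk
    rw [← hss] at this
    exact (this.trans (hsl _)).le
  have hll : l' = l := Subtype.ext (by rw [← hl1, hfix])
  rw [hll] at hl2
  obtain ⟨_, ⟨n, rfl⟩, hn⟩ := (lt_isLUB_iff (lad_lub l)).1 (hsl 0)
  have hall : ∀ k, s k < lad l n := by
    intro k
    induction k with
    | zero => exact hn
    | succ k ih => rw [hss, ← hl2 n]; exact hf ih
  have : m ≤ lad l n := hlub.2 (by rintro _ ⟨k, rfl⟩; exact (hall k).le)
  exact absurd (lad_lt l n) (not_lt.2 this)

end Ladder

section Graph

variable {P : Type u} [LinearOrder P]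

/-- Gadgets. -/
inductive EE (P : Type u) [LinearOrder P] : Type u
  | lt (z : {z : WithTop P × WithTop P // z.1 < z.2}) : EE P
  | lad0 (l : {l : WithTop P // Lad l}) : EE P
  | lads (l : {l : WithTop P // Lad l}) (n : ℕ) : EE P
  | mark : EE P

/-- Attachment of the gadget clique vertices to ordinals. -/
noncomputable def att (p : P) : EE P → Fin 8 → WithTop P
  | .lt z => ![z.1.1, z.1.1, z.1.2, z.1.2, z.1.2, z.1.2, z.1.2, z.1.2]
  | .lad0 l => ![l.1, l.1, l.1, lad l 0, lad l 0, lad l 0, lad l 0, lad l 0]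
  | .lads l n => ![l.1, lad l n, lad l n, lad l (n+1), lad l (n+1), lad l (n+1), lad l (n+1),
      lad l (n+1)]
  | .mark => ![(p : WithTop P), p, p, p, ⊤, ⊤, ⊤, ⊤]

open Classical in
/-- Number of attachments. -/
noncomputable def cnt (p : P) (e : EE P) (a : WithTop P) : ℕ :=
  ∑ i, if att p e i = a then 1 else 0

open Classical in
lemma cnt_lt (p : P) (z) (a : WithTop P) : cnt p (.lt z) a =
    2 * (if z.1.1 = a then 1 else 0) + 6 * (if z.1.2 = a then 1 else 0) := by
  simp only [cnt, att, Fin.sum_univ_eight]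
  by_cases h1 : z.1.1 = a <;> by_cases h2 : z.1.2 = a <;> simp [h1, h2]

open Classical in
lemma cnt_lad0 (p : P) (l) (a : WithTop P) : cnt p (.lad0 l) a =
    3 * (if l.1 = a then 1 else 0) + 5 * (if lad l 0 = a then 1 else 0) := by
  simp only [cnt, att, Fin.sum_univ_eight]
  by_cases h1 : l.1 = a <;> by_cases h2 : lad l 0 = a <;> simp [h1, h2]

open Classical in
lemma cnt_lads (p : P) (l) (n : ℕ) (a : WithTop P) : cnt p (.lads l n) a =
    (if l.1 = a then 1 else 0) + 2 * (if lad l n = a then 1 else 0)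
      + 5 * (if lad l (n+1) = a then 1 else 0) := by
  simp only [cnt, att, Fin.sum_univ_eight]
  by_cases h1 : l.1 = a <;> by_cases h2 : lad l n = a <;> by_cases h3 : lad l (n+1) = a <;>
    simp [h1, h2, h3]

open Classical in
lemma cnt_mark (p : P) (a : WithTop P) : cnt p .mark a =
    4 * (if (p : WithTop P) = a then 1 else 0) + 4 * (if ⊤ = a then 1 else 0) := by
  simp only [cnt, att, Fin.sum_univ_eight]
  by_cases h1 : (p : WithTop P) = a <;> by_cases h2 : ⊤ = a <;> simp [h1, h2]

lemma cnt_le (p : P) (e : EE P) (a : WithTop P) : cnt p e a ≤ 6 := by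
  rcases e with ⟨⟨x, y⟩, h⟩ | l | ⟨l, n⟩ | _
  · rw [cnt_lt]
    have := h.ne
    dsimp only at this ⊢
    split_ifs <;> first | omega | (subst_vars; contradiction)
  · rw [cnt_lad0]
    have := (lad_lt l 0).ne
    split_ifs <;> first | omega | (exfalso; apply this; simp_all)
  · rw [cnt_lads]
    have h1 := (lad_lt l n).ne
    have h2 := (lad_lt l (n + 1)).ne
    have h3 := (lad_mono l (Nat.lt_succ_self n)).ne
    split_ifs <;> first | omega | (exfalso; simp_all)
  · rw [cnt_mark]
    split_ifs with h1 h2 <;> first | omega | exact absurd (h1.trans h2.symm) WithTop.coe_ne_top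

/-- Fat vertices in one component. -/
abbrev BB (P : Type u) [LinearOrder P] := WithTop P ⊕ (EE P × Fin 8)

/-- Adjacency. -/
def Adj (p : P) : BB P → BB P → Prop
  | .inl _, .inl _ => False
  | .inl a, .inr (e, i) => att p e i = a
  | .inr (e, i), .inl a => att p e i = a
  | .inr (e, i), .inr (e', j) => e = e' ∧ i ≠ j

lemma Adj.ne {p : P} {b b' : BB P} (h : Adj p b b') : b ≠ b' := by
  rintro rfl
  rcases b with a | ⟨e, i⟩ <;> simp [Adj] at h

lemma gadget {p : P} {F : BB P → (P × Bool) × BB P} (hF : Function.Injective F)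
    (hadj : ∀ b b', Adj p b b' → (F b).1 = (F b').1 ∧
      (Adj (F b).1.1 (F b).2 (F b').2 ∨ Adj (F b).1.1 (F b').2 (F b).2)) (e : EE P) :
    ∃ (c : P × Bool) (e' : EE P) (π : Equiv.Perm (Fin 8)),
      ∀ i, F (.inl (att p e i)) = (c, .inl (att c.1 e' (π i))) := by
  have hsymm : ∀ (p : P) (b b' : BB P), Adj p b b' → Adj p b' b := by
    rintro p (a | ⟨e, i⟩) (b | ⟨e', j⟩) h <;> simp_all [Adj]
    exact fun h' => h.2 h'.symm
  have hadj' : ∀ b b', Adj p b b' → (F b).1 = (F b').1 ∧ Adj (F b).1.1 (F b).2 (F b').2 := by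
    intro b b' h
    refine ⟨(hadj b b' h).1, ?_⟩
    rcases (hadj b b' h).2 with h | h
    · exact h
    · exact hsymm _ _ _ h
  set c := (F (.inr (e, 0))).1 with hc
  have hcl : ∀ i j, i ≠ j → Adj p (.inr (e, i)) (.inr (e, j)) := fun i j h => ⟨rfl, h⟩
  have hcc : ∀ i, (F (.inr (e, i))).1 = c := by
    intro i
    by_cases h : i = 0
    · rw [h]
    · exact (hadj' _ _ (hcl i 0 h)).1
  have hA : ∀ i j, i ≠ j → Adj c.1 (F (.inr (e, i))).2 (F (.inr (e, j))).2 := by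
    intro i j h
    have := (hadj' _ _ (hcl i j h)).2
    rwa [hcc i] at this
  have hinj : ∀ i j, (F (.inr (e, i))).2 = (F (.inr (e, j))).2 → i = j := by
    intro i j h
    have h2 : F (.inr (e, i)) = F (.inr (e, j)) := Prod.ext ((hcc i).trans (hcc j).symm) h
    simpa using hF h2
  -- no clique vertex goes to an ordinal
  have hno : ∀ i a, (F (.inr (e, i))).2 ≠ .inl a := by
    intro i0 a h0
    have h1 : ∀ i, i ≠ i0 → ∃ e' j, (F (.inr (e, i))).2 = .inr (e', j) ∧ att c.1 e' j = a := by
      intro i hi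
      have := hA i i0 hi
      rw [h0] at this
      rcases h : (F (.inr (e, i))).2 with b | ⟨e', j⟩
      · rw [h] at this; exact this.elim
      · rw [h] at this; exact ⟨e', j, rfl, this⟩
    obtain ⟨i1, hi1⟩ : ∃ i1, i1 ≠ i0 := exists_ne i0
    obtain ⟨e1, j1, h2, -⟩ := h1 i1 hi1
    have h3 : ∀ i, i ≠ i0 → ∃ j, (F (.inr (e, i))).2 = .inr (e1, j) ∧ att c.1 e1 j = a := by
      intro i hi
      obtain ⟨e', j, h4, h5⟩ := h1 i hi
      by_cases hii : i = i1
      · subst hii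
        rw [h2] at h4
        simp only [Sum.inr.injEq, Prod.mk.injEq] at h4
        obtain ⟨rfl, rfl⟩ := h4
        exact ⟨j1, h2, h5⟩
      · have := hA i i1 hii
        rw [h4, h2] at this
        obtain ⟨rfl, -⟩ := this
        exact ⟨j, h4, h5⟩
    choose! k hk using h3
    classical
    have hcard : (Finset.univ.erase i0).card ≤ (Finset.univ.filter fun j => att c.1 e1 j = a).card := by
      apply Finset.card_le_card_of_injOn k
      · intro i hi
        have hi : i ≠ i0 := by simpa using hi
        simp [(hk i hi).2]
      · intro i hi j hj hij
        have hi : i ≠ i0 := by simpa using hi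
        have hj : j ≠ i0 := by simpa using hj
        apply hinj
        rw [(hk i hi).1, (hk j hj).1, hij]
    have h6 := cnt_le c.1 e1 a
    rw [cnt, Finset.sum_boole] at h6
    simp at hcard h6
    omega
  have h7 : ∀ i, ∃ e' j, (F (.inr (e, i))).2 = .inr (e', j) := by
    intro i
    rcases h : (F (.inr (e, i))).2 with a | ⟨e', j⟩
    · exact (hno i a h).elim
    · exact ⟨e', j, rfl⟩
  obtain ⟨e', j0, he'⟩ := h7 0
  have h8 : ∀ i, ∃ j, (F (.inr (e, i))).2 = .inr (e', j) := by
    intro i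
    by_cases hi : i = 0
    · exact ⟨j0, by rw [hi, he']⟩
    · obtain ⟨e1, j, h9⟩ := h7 i
      have := hA i 0 hi
      rw [h9, he'] at this
      obtain ⟨rfl, -⟩ := this
      exact ⟨j, h9⟩
  choose π hπ using h8
  have hπi : Function.Injective π := by
    intro i j h
    apply hinj
    rw [hπ, hπ, h]
  have hπb : Function.Bijective π := Finite.injective_iff_bijective.1 hπi
  refine ⟨c, e', Equiv.ofBijective π hπb, ?_⟩
  intro i
  have hai : Adj p (.inl (att p e i)) (.inr (e, i)) := rfl
  obtain ⟨g1, g2⟩ := hadj' _ _ hai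
  rw [hcc i] at g1
  rw [g1, hπ] at g2
  refine Prod.ext g1 ?_
  rcases h : (F (.inl (att p e i))).2 with a | ⟨e2, j⟩
  · rw [h] at g2
    have g2 : att c.1 e' (π i) = a := g2
    simp [g2]
  · exfalso
    rw [h] at g2
    obtain ⟨rfl, -⟩ := g2
    obtain ⟨i', rfl⟩ := hπb.2 j
    have : F (.inl (att p e i)) = F (.inr (e, i')) :=
      Prod.ext (g1.trans (hcc i').symm) (by rw [h, hπ])
    simpa using hF this

lemma graph_rigid [WellFoundedLT P] {p : P} {F : BB P → (P × Bool) × BB P}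
    (hF : Function.Injective F)
    (hadj : ∀ b b', Adj p b b' → (F b).1 = (F b').1 ∧
      (Adj (F b).1.1 (F b).2 (F b').2 ∨ Adj (F b).1.1 (F b').2 (F b).2)) :
    ∃ c : P × Bool, c.1 = p ∧ ∀ a, F (.inl a) = (c, .inl a) := by
  have hg := gadget hF hadj
  -- the component of the top
  obtain ⟨c, em, πm, hm⟩ := hg .mark
  have htop : F (.inl ⊤) = (c, .inl (att c.1 em (πm 7))) := hm 7
  have h1 : ∀ a, ∃ a', F (.inl a) = (c, .inl a') := by
    intro a
    by_cases ha : a = ⊤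
    · rw [ha]; exact ⟨_, htop⟩
    · obtain ⟨c', e', π, h⟩ := hg (.lt ⟨(a, ⊤), lt_top_iff_ne_top.2 ha⟩)
      have h0 := h 0
      have h7 := h 7
      simp only [att] at h0 h7
      have e1 : F (.inl ⊤) = (c', .inl (att c'.1 e' (π 7))) := h7
      have e0 : F (.inl a) = (c', .inl (att c'.1 e' (π 0))) := h0
      rw [htop] at e1
      have : c = c' := congrArg Prod.fst e1
      rw [this]
      exact ⟨_, e0⟩
  choose φ hφ using h1
  have hφi : Function.Injective φ := by
    intro a b h
    have : F (.inl a) = F (.inl b) := by rw [hφ, hφ, h]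
    simpa using hF this
  have hcnt : ∀ e, ∃ e', ∀ a, cnt c.1 e' (φ a) = cnt p e a := by
    intro e
    obtain ⟨c', e', π, h⟩ := hg e
    have hc : c' = c := by
      have := h 0
      rw [hφ] at this
      exact (congrArg Prod.fst this).symm
    subst hc
    refine ⟨e', fun a => ?_⟩
    have h2 : ∀ i, φ (att p e i) = att c'.1 e' (π i) := by
      intro i
      have := h i
      rw [hφ] at this
      simpa using this
    unfold cnt
    rw [← Equiv.sum_comp π]
    apply Finset.sum_congr rfl
    intro i _
    rw [← h2]
    simp [hφi.eq_iff]
  have hmono : StrictMono φ := by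
    intro x y hxy
    obtain ⟨e', he⟩ := hcnt (.lt ⟨(x, y), hxy⟩)
    have hx := he x
    have hy := he y
    rw [cnt_lt] at hx hy
    simp only [hxy.ne, hxy.ne', if_true, if_false] at hx hy
    rcases e' with ⟨⟨x', y'⟩, h⟩ | l | ⟨l, n⟩ | _
    · rw [cnt_lt] at hx hy
      dsimp only at hx hy
      have ex : x' = φ x := by split_ifs at hx <;> first | omega | assumption
      have ey : y' = φ y := by split_ifs at hy <;> first | omega | assumption
      rw [← ex, ← ey]; exact h
    · rw [cnt_lad0] at hy; split_ifs at hy <;> first | omega | skip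
    · rw [cnt_lads] at hx hy
      have h2 := (lad_lt l (n + 1)).ne
      split_ifs at hx hy <;> first | omega | (exfalso; simp_all)
    · rw [cnt_mark] at hy; split_ifs at hy <;> omega
  have hl0 : ∀ l : {l : WithTop P // Lad l}, ∃ l' : {l : WithTop P // Lad l}, φ l.1 = l'.1 ∧
      φ (lad l 0) = lad l' 0 := by
    intro l
    obtain ⟨e', he⟩ := hcnt (.lad0 l)
    have hx := he l.1
    have hy := he (lad l 0)
    rw [cnt_lad0] at hx hy
    simp only [(lad_lt l 0).ne, (lad_lt l 0).ne', if_true, if_false] at hx hy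
    rcases e' with ⟨⟨x', y'⟩, h⟩ | l' | ⟨l', n⟩ | _
    · rw [cnt_lt] at hx; split_ifs at hx <;> omega
    · rw [cnt_lad0] at hx hy
      refine ⟨l', ?_, ?_⟩
      · split_ifs at hx <;> first | omega | (symm; assumption)
      · split_ifs at hy <;> first | omega | (symm; assumption)
    · rw [cnt_lads] at hx hy
      have h1 := (lad_lt l' n).ne
      split_ifs at hx hy <;> first | omega | (exfalso; simp_all)
    · rw [cnt_mark] at hx; split_ifs at hx <;> omega
  have hls : ∀ (l : {l : WithTop P // Lad l}) (n : ℕ), ∃ (l' : {l : WithTop P // Lad l}) (n' : ℕ),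
      φ l.1 = l'.1 ∧ φ (lad l n) = lad l' n' ∧ φ (lad l (n + 1)) = lad l' (n' + 1) := by
    intro l n
    obtain ⟨e', he⟩ := hcnt (.lads l n)
    have h3 := lad_mono l (Nat.lt_succ_self n)
    have hx := he l.1
    have hy := he (lad l n)
    have hz := he (lad l (n + 1))
    rw [cnt_lads] at hx hy hz
    simp only [(lad_lt l n).ne, (lad_lt l n).ne', (lad_lt l (n + 1)).ne, (lad_lt l (n + 1)).ne',
      h3.ne, h3.ne', if_true, if_false] at hx hy hz
    rcases e' with ⟨⟨x', y'⟩, h⟩ | l' | ⟨l', n'⟩ | _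
    · rw [cnt_lt] at hx; split_ifs at hx <;> omega
    · rw [cnt_lad0] at hx; split_ifs at hx <;> omega
    · rw [cnt_lads] at hx hy hz
      refine ⟨l', n', ?_, ?_, ?_⟩
      · split_ifs at hx <;> first | omega | (symm; assumption)
      · split_ifs at hy <;> first | omega | (symm; assumption)
      · split_ifs at hz <;> first | omega | (symm; assumption)
    · rw [cnt_mark] at hx; split_ifs at hx <;> omega
  have hid : ∀ a, φ a = a := by
    apply rigid hmono
    intro l
    obtain ⟨l', h1, h2⟩ := hl0 l
    refine ⟨l', h1, fun n => ?_⟩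
    induction n with
    | zero => exact h2
    | succ n ih =>
      obtain ⟨l2, n', g1, g2, g3⟩ := hls l n
      have : l2 = l' := Subtype.ext (by rw [← g1, h1])
      subst this
      rw [ih] at g2
      rw [g3, (lad_mono l2).injective g2]
  refine ⟨c, ?_, fun a => by rw [hφ, hid]⟩
  obtain ⟨e', he⟩ := hcnt .mark
  have hx := he p
  rw [hid, cnt_mark] at hx
  simp only [if_true, WithTop.top_ne_coe, if_false] at hx
  rcases e' with ⟨⟨x', y'⟩, h⟩ | l' | ⟨l', n'⟩ | _
  · rw [cnt_lt] at hx; split_ifs at hx <;> omega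
  · rw [cnt_lad0] at hx; split_ifs at hx <;> omega
  · rw [cnt_lads] at hx; split_ifs at hx <;> omega
  · rw [cnt_mark] at hx
    by_contra hne
    simp [hne] at hx

end Graph

end QRep
namespace QRep

section Reindex

open Set Topology

variable {V : Type u} [TopologicalSpace V] [DiscreteTopology V]

/-- Reindexing the ambient space. -/
noncomputable def RR (σ : Equiv.Perm V) (x : ZZ V) : ZZ V :=
  x.compContinuous ⟨Sum.map σ.symm (Prod.map σ.symm σ.symm), continuous_of_discreteTopology⟩

lemma continuous_RR (σ : Equiv.Perm V) : Continuous (RR σ) :=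
  BoundedContinuousFunction.continuous_compContinuous _

lemma RR_symm (σ : Equiv.Perm V) (x : ZZ V) : RR σ.symm (RR σ x) = x := by
  ext j
  rcases j with a | ⟨a, b⟩ <;> simp [RR]

lemma RR_gg (σ : Equiv.Perm V) (u v : V) (p : ℂ) : RR σ (gg u v p) = gg (σ u) (σ v) p := by
  ext j
  rcases j with a | ⟨a, b⟩
  · have : RR σ (gg u v p) (Sum.inl a) = gg u v p (Sum.inl (σ.symm a)) := rfl
    have e : ∀ w, σ.symm a = w ↔ a = σ w := fun w => Equiv.symm_apply_eq σ
    rw [this, gg_inl, gg_inl]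
    congr 2
    · by_cases h : a = σ u
      · rw [if_pos h, if_pos ((e u).2 h)]
      · rw [if_neg h, if_neg (fun h2 => h ((e u).1 h2))]
    · by_cases h : a = σ v
      · rw [if_pos h, if_pos ((e v).2 h)]
      · rw [if_neg h, if_neg (fun h2 => h ((e v).1 h2))]
  · have : RR σ (gg u v p) (Sum.inr (a, b)) = gg u v p (Sum.inr (σ.symm a, σ.symm b)) := rfl
    have e : ∀ w, σ.symm a = w ↔ a = σ w := fun w => Equiv.symm_apply_eq σ
    have e' : ∀ w, σ.symm b = w ↔ b = σ w := fun w => Equiv.symm_apply_eq σ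
    rw [this, gg_inr, gg_inr]
    by_cases h1 : a = σ u <;> by_cases h2 : b = σ v <;> simp [e, e', h1, h2]

lemma exists_emb {D D' : V → V → Set ℂ} (σ : Equiv.Perm V)
    (h : ∀ u v, D u v ⊆ D' (σ u) (σ v)) : ∃ f : XD D → XD D', IsEmbedding f := by
  have hR : IsEmbedding (RR σ) :=
    IsEmbedding.of_leftInverse (RR_symm σ) (continuous_RR σ.symm) (continuous_RR σ)
  have hm : ∀ x ∈ XD D, RR σ x ∈ XD D' := by
    rintro _ ⟨u, v, p, hp, rfl⟩
    exact ⟨σ u, σ v, p, h u v hp, RR_gg σ u v p⟩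
  refine ⟨fun x => ⟨RR σ x.1, hm _ x.2⟩, ?_⟩
  exact (hR.comp IsEmbedding.subtypeVal).codRestrict _ _

lemma homeoToSubspace_iff {A B : Type*} [TopologicalSpace A] [TopologicalSpace B] :
    HomeoToSubspace A B ↔ ∃ f : A → B, IsEmbedding f := by
  constructor
  · rintro ⟨t, ⟨e⟩⟩
    exact ⟨fun x => (e x).1, IsEmbedding.subtypeVal.comp e.isEmbedding⟩
  · rintro ⟨f, hf⟩
    exact ⟨range f, ⟨hf.toHomeomorph⟩⟩

/-- Limits of points with countable neighbourhoods. -/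
def Good {T : Type*} [TopologicalSpace T] (x : T) : Prop :=
  x ∈ closure {y : T | ∃ U : Set T, IsOpen U ∧ y ∈ U ∧ U.Countable}

lemma Good.map {T T' : Type*} [TopologicalSpace T] [TopologicalSpace T'] (e : T ≃ₜ T') {x : T}
    (h : Good x) : Good (e x) := by
  refine map_mem_closure e.continuous h ?_
  rintro y ⟨U, hU, hy, hc⟩
  exact ⟨e '' U, e.isOpen_image.2 hU, mem_image_of_mem _ hy, hc.image _⟩

end Reindex

section Space

open Set Topology

variable {P : Type u} [LinearOrder P]

/-- Vertices: component, base vertex, optional pendant leaf. -/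
@[ext] structure VV (P : Type u) [LinearOrder P] : Type u where
  comp : P × Bool
  base : BB P
  leaf : Option ℝ

instance : TopologicalSpace (VV P) := ⊥
instance : DiscreteTopology (VV P) := ⟨rfl⟩

/-- Cell parameters of the part with components in `S`. -/
def DD (S : Set (P × Bool)) (u v : VV P) : Set ℂ :=
  {z | u.comp ∈ S ∧ u.comp = v.comp ∧ u.leaf = none ∧
    ((v.leaf = none ∧ Adj u.comp.1 u.base v.base) ∨
      (u.base = v.base ∧ ∃ k, v.leaf = some k ∧
        (0 < k ∨ (k = 0 ∧ u.comp.2 = true ∧ ∃ q : ℚ, z = (q : ℂ)))))}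

lemma DD_ne {S : Set (P × Bool)} (u v : VV P) (h : (DD S u v).Nonempty) : u ≠ v := by
  rintro rfl
  obtain ⟨z, h1, h2, h3, ⟨h4, h5⟩ | ⟨h4, k, h5, h6⟩⟩ := h
  · exact h5.ne rfl
  · simp [h3] at h5

lemma comp_eq {S : Set (P × Bool)} {u v w : VV P} {p : ℂ} (hp : p ∈ DD S u v)
    (hw : gg u v p (Sum.inl w) ≠ 0) : w.comp = u.comp := by
  rcases gg_inl_ne hw with rfl | rfl
  · rfl
  · exact hp.2.1.symm

lemma exists_coord {u v : VV P} (h : u ≠ v) (p : ℂ) : ∃ w, gg u v p (Sum.inl w) ≠ 0 := by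
  by_cases hp : p = 0
  · exact ⟨u, by rw [gg_left h, hp]; simp⟩
  · exact ⟨v, by rw [gg_right h]; exact hp⟩

lemma mem_XD_iff {S : Set (P × Bool)} {x : ZZ (VV P)} (hx : x ∈ XD (DD (Set.univ : Set (P × Bool)))) :
    x ∈ XD (DD S) ↔ ∃ w : VV P, w.comp ∈ S ∧ x (Sum.inl w) ≠ 0 := by
  constructor
  · rintro ⟨u, v, p, hp, rfl⟩
    obtain ⟨w, hw⟩ := exists_coord (DD_ne u v ⟨p, hp⟩) p
    exact ⟨w, by rw [comp_eq hp hw]; exact hp.1, hw⟩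
  · rintro ⟨w, hw, hw'⟩
    obtain ⟨u, v, p, hp, rfl⟩ := hx
    rw [comp_eq hp hw'] at hw
    exact ⟨u, v, p, ⟨hw, hp.2⟩, rfl⟩

lemma not_mem_XD_iff {S : Set (P × Bool)} {x : ZZ (VV P)}
    (hx : x ∈ XD (DD (Set.univ : Set (P × Bool)))) :
    x ∉ XD (DD S) ↔ ∃ w : VV P, w.comp ∉ S ∧ x (Sum.inl w) ≠ 0 := by
  rw [mem_XD_iff hx]
  obtain ⟨u, v, p, hp, rfl⟩ := hx
  constructor
  · intro h
    obtain ⟨w, hw⟩ := exists_coord (DD_ne u v ⟨p, hp⟩) p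
    exact ⟨w, fun hS => h ⟨w, hS, hw⟩, hw⟩
  · rintro ⟨w, hw, hw'⟩ ⟨w2, h2, h2'⟩
    rw [comp_eq hp hw'] at hw
    rw [comp_eq hp h2'] at h2
    exact hw h2

/-- The whole space. -/
abbrev XX (P : Type u) [LinearOrder P] := XD (DD (Set.univ : Set (P × Bool)))

/-- The clopen part with components in `S`. -/
def XS (S : Set (P × Bool)) : Set (XX P) := {x | x.1 ∈ XD (DD S)}

lemma isOpen_aux (S : Set (P × Bool)) :
    IsOpen {x : XX P | ∃ w : VV P, w.comp ∈ S ∧ x.1 (Sum.inl w) ≠ 0} := by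
  have : {x : XX P | ∃ w : VV P, w.comp ∈ S ∧ x.1 (Sum.inl w) ≠ 0} =
      ⋃ w ∈ {w : VV P | w.comp ∈ S}, Subtype.val ⁻¹' {x : ZZ (VV P) | x (Sum.inl w) ≠ 0} := by
    ext x; simp
  rw [this]
  exact isOpen_biUnion fun w _ => (isOpen_coord _).preimage continuous_subtype_val

lemma isClopen_XS (S : Set (P × Bool)) : IsClopen (XS S) := by
  constructor
  · rw [← isOpen_compl_iff]
    convert isOpen_aux Sᶜ using 1
    ext x
    exact not_mem_XD_iff x.2
  · convert isOpen_aux S using 1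
    ext x
    exact mem_XD_iff x.2

lemma XD_mono (S : Set (P × Bool)) : XD (DD S) ⊆ XX P := by
  rintro _ ⟨u, v, p, hp, rfl⟩
  exact ⟨u, v, p, ⟨trivial, hp.2⟩, rfl⟩

/-- Flattening the nested subtype. -/
noncomputable def flat (S : Set (P × Bool)) : XS S ≃ₜ XD (DD S) :=
  ((IsEmbedding.subtypeVal.comp IsEmbedding.subtypeVal :
    IsEmbedding (fun x : XS S => x.1.1)).toHomeomorph).trans (Homeomorph.setCongr (by
      ext x
      constructor
      · rintro ⟨y, rfl⟩; exact y.2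
      · intro hx; exact ⟨⟨⟨x, XD_mono S hx⟩, hx⟩, rfl⟩))

lemma leaf_univ {S : Set (P × Bool)} {c : P × Bool} (hc : c ∈ S) (b : BB P) {k : ℝ} (hk : 0 < k) :
    DD S ⟨c, b, none⟩ ⟨c, b, some k⟩ = Set.univ := by
  ext z
  simp [DD, hc, hk]

lemma vert_mem {S : Set (P × Bool)} {c : P × Bool} (hc : c ∈ S) (b : BB P) :
    (dl (Sum.inl ⟨c, b, none⟩) : ZZ (VV P)) ∈ XD (DD S) :=
  ⟨⟨c, b, none⟩, ⟨c, b, some 1⟩, 0, by rw [leaf_univ hc b one_pos]; trivial, (gg_zero _ _).symm⟩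

lemma fat_unc {S : Set (P × Bool)} {c : P × Bool} (hc : c ∈ S) (b : BB P) :
    ¬ {w | DD S ⟨c, b, none⟩ w = Set.univ}.Countable := by
  intro h
  have h2 : (Ioi (0 : ℝ)).Countable := by
    refine (h.preimage_of_injOn (f := fun k : ℝ => (⟨c, b, some k⟩ : VV P)) ?_).mono ?_
    · intro x _ y _ hxy
      simpa using hxy
    · intro k hk
      exact leaf_univ hc b hk
  rw [← Cardinal.le_aleph0_iff_set_countable, Cardinal.mk_Ioi_real] at h2
  exact absurd Cardinal.aleph0_lt_continuum (not_lt.2 h2)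

lemma vert_map {S S' : Set (P × Bool)} {φ : XD (DD S) → ZZ (VV P)} (hφ : IsEmbedding φ)
    (hr : ∀ x, φ x ∈ XD (DD S')) {c : P × Bool} (hc : c ∈ S) (b : BB P) :
    ∃ c' : (P × Bool) × BB P, φ ⟨_, vert_mem hc b⟩ = dl (Sum.inl ⟨c'.1, c'.2, none⟩) := by
  obtain ⟨u, v, p, hp, hx⟩ := hr ⟨_, vert_mem hc b⟩
  have huv := DD_ne u v ⟨p, hp⟩
  by_cases hmid : p = 0 ∨ p = 1
  · have h1 : ∃ w, φ ⟨_, vert_mem hc b⟩ = dl (Sum.inl w) := by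
      rcases hmid with rfl | rfl
      · exact ⟨u, by rw [hx, gg_zero]⟩
      · exact ⟨v, by rw [hx, gg_one]⟩
    obtain ⟨⟨c', b', l⟩, hw⟩ := h1
    rcases l with _ | k
    · exact ⟨(c', b'), hw⟩
    · exfalso
      refine fat (D := DD S) DD_ne hφ (fat_unc hc b) (vert_mem hc b) (isOpen_coord (Sum.inl ⟨c', b', some k⟩)) (a := ⟨c', b', none⟩)
        (b := ⟨c', b', some k⟩) ?_ ?_
      · change φ _ _ ≠ 0
        rw [hw]; simp [dl_apply]
      · intro x hxO
        obtain ⟨u, v, p, hp, hx⟩ := hr x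
        have hxO : φ x (Sum.inl ⟨c', b', some k⟩) ≠ 0 := hxO
        rw [hx] at hxO
        obtain ⟨-, h2, h3, h4⟩ := hp
        rcases gg_inl_ne hxO with rfl | rfl
        · simp at h3
        · rcases h4 with ⟨h4, -⟩ | ⟨h4, -⟩
          · simp at h4
          · rw [hx]
            have : u = ⟨c', b', none⟩ := VV.ext h2 h4 h3
            rw [this]
            exact mem_range_self _
  · exfalso
    push Not at hmid
    refine fat (D := DD S) DD_ne hφ (fat_unc hc b) (vert_mem hc b) (isOpen_coord (Sum.inr (u, v))) (a := u) (b := v) ?_ ?_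
    · change φ _ _ ≠ 0
      rw [hx, gg_mid]
      exact mul_ne_zero hmid.1 (sub_ne_zero.2 (Ne.symm hmid.2))
    · intro x hxO
      obtain ⟨u', v', p', hp', hx'⟩ := hr x
      have hxO : φ x (Sum.inr (u, v)) ≠ 0 := hxO
      rw [hx'] at hxO
      obtain ⟨rfl, rfl, -⟩ := gg_inr_ne hxO
      rw [hx']
      exact mem_range_self _

lemma emb_rigid [WellFoundedLT P] {S S' : Set (P × Bool)} {φ : XD (DD S) → ZZ (VV P)}
    (hφ : IsEmbedding φ) (hr : ∀ x, φ x ∈ XD (DD S')) {c : P × Bool} (hc : c ∈ S) :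
    ∃ c' ∈ S', c'.1 = c.1 ∧ φ ⟨_, vert_mem hc (.inl ⊤)⟩ = dl (Sum.inl ⟨c', .inl ⊤, none⟩) := by
  choose F hF using fun b => vert_map hφ hr hc b
  have hFi : Function.Injective F := by
    intro b b' h
    have h1 : φ ⟨_, vert_mem hc b⟩ = φ ⟨_, vert_mem hc b'⟩ := by rw [hF, hF, h]
    have h2 := congrArg Subtype.val (hφ.injective h1)
    have h3 := dl_inj h2
    simpa using h3
  have hadj : ∀ b b', Adj c.1 b b' → (F b).1 = (F b').1 ∧
      (Adj (F b).1.1 (F b).2 (F b').2 ∨ Adj (F b).1.1 (F b').2 (F b).2) := by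
    intro b b' hbb
    have hD : ∀ z, z ∈ DD S ⟨c, b, none⟩ ⟨c, b', none⟩ := by
      intro z
      exact ⟨hc, rfl, rfl, Or.inl ⟨rfl, hbb⟩⟩
    have hne : (⟨c, b, none⟩ : VV P) ≠ ⟨c, b', none⟩ := DD_ne _ _ ⟨0, hD 0⟩
    let G : ℂ → XD (DD S) := fun z => ⟨gg ⟨c, b, none⟩ ⟨c, b', none⟩ z, _, _, z, hD z, rfl⟩
    have hGc : Continuous G := (continuous_gg _ _).subtype_mk _
    have hGi : Function.Injective G := by
      intro z z' h
      exact gg_injective hne (congrArg Subtype.val h)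
    obtain ⟨u, v, ⟨z, hz⟩, huv⟩ := block (D := DD S') DD_ne (hφ.continuous.comp hGc)
      (hφ.injective.comp hGi) (fun z => hr _)
    have h0 : φ (G 0) = dl (Sum.inl ⟨(F b).1, (F b).2, none⟩) := by
      rw [← hF b]; congr 1; exact Subtype.ext (gg_zero _ _)
    have h1 : φ (G 1) = dl (Sum.inl ⟨(F b').1, (F b').2, none⟩) := by
      rw [← hF b']; congr 1; exact Subtype.ext (gg_one _ _)
    obtain ⟨z0, hz0⟩ := huv 0
    obtain ⟨z1, hz1⟩ := huv 1
    have e0 := dl_mem_range (hz0.trans h0)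
    have e1 := dl_mem_range (hz1.trans h1)
    have hFne : F b ≠ F b' := fun h => hbb.ne (hFi h)
    obtain ⟨-, g2, g3, g4⟩ := hz
    have key : ∀ x y : (P × Bool) × BB P, u = ⟨x.1, x.2, none⟩ → v = ⟨y.1, y.2, none⟩ →
        x.1 = y.1 ∧ Adj x.1.1 x.2 y.2 := by
      rintro x y rfl rfl
      refine ⟨g2, ?_⟩
      rcases g4 with g4 | ⟨-, k, g4, -⟩
      · exact g4.2
      · simp at g4
    rcases e0 with e0 | e0 <;> rcases e1 with e1 | e1
    · exact absurd (Prod.ext (congrArg VV.comp (e0.trans e1.symm))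
        (congrArg VV.base (e0.trans e1.symm))) hFne
    · obtain ⟨k1, k2⟩ := key _ _ e0.symm e1.symm
      exact ⟨k1, Or.inl k2⟩
    · obtain ⟨k1, k2⟩ := key _ _ e1.symm e0.symm
      exact ⟨k1.symm, Or.inr (k1 ▸ k2)⟩
    · exact absurd (Prod.ext (congrArg VV.comp (e0.trans e1.symm))
        (congrArg VV.base (e0.trans e1.symm))) hFne
  obtain ⟨c', hc1, hc2⟩ := graph_rigid hFi hadj
  have hfin : φ ⟨_, vert_mem hc (.inl ⊤)⟩ = dl (Sum.inl ⟨c', .inl ⊤, none⟩) := by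
    rw [hF, hc2]
  refine ⟨c', ?_, hc1, hfin⟩
  obtain ⟨u, v, p, hp, hx⟩ := hr ⟨_, vert_mem hc (.inl ⊤)⟩
  have hcoord : gg u v p (Sum.inl ⟨c', .inl ⊤, none⟩) ≠ 0 := by
    rw [← hx, hfin]; simp [dl_apply]
  have := comp_eq hp hcoord
  dsimp only at this
  rw [this]
  exact hp.1

lemma good_true {S : Set (P × Bool)} {c : P × Bool} (hc : c ∈ S) (h2 : c.2 = true) (b : BB P) :
    Good (⟨_, vert_mem hc b⟩ : XD (DD S)) := by
  have hD : ∀ q : ℚ, (q : ℂ) ∈ DD S ⟨c, b, none⟩ ⟨c, b, some 0⟩ := by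
    intro q
    exact ⟨hc, rfl, rfl, Or.inr ⟨rfl, 0, rfl, Or.inr ⟨rfl, h2, q, rfl⟩⟩⟩
  have hDD : ∀ z, z ∈ DD S ⟨c, b, none⟩ ⟨c, b, some 0⟩ → ∃ q : ℚ, z = q := by
    rintro z ⟨-, -, -, ⟨h, -⟩ | ⟨-, k, hk, h⟩⟩
    · simp at h
    · rcases h with h | ⟨-, -, h⟩
      · simp only [Option.some.injEq] at hk
        exact absurd h (by rw [← hk]; exact lt_irrefl _)
      · exact h
  let G : ℚ → XD (DD S) := fun q => ⟨gg ⟨c, b, none⟩ ⟨c, b, some 0⟩ (q : ℂ), _, _, _, hD q, rfl⟩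
  let s : ℕ → ℚ := fun n => 1 / ((n : ℚ) + 1 + 1)
  have hs : Filter.Tendsto (fun n => ((s n : ℚ) : ℂ)) Filter.atTop (𝓝 0) := by
    have := (tendsto_one_div_add_atTop_nhds_zero_nat (𝕜 := ℂ)).comp
      (Filter.tendsto_add_atTop_nat 1)
    refine this.congr fun n => ?_
    simp [s]
  refine mem_closure_of_tendsto (f := fun n => G (s n)) (b := Filter.atTop) ?_
    (Filter.Eventually.of_forall fun n => ?_)
  · rw [tendsto_subtype_rng]
    have h3 := ((continuous_gg (⟨c, b, none⟩ : VV P) ⟨c, b, some 0⟩).tendsto' 0 _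
      (gg_zero _ _)).comp hs
    exact h3
  · refine ⟨Subtype.val ⁻¹' {x : ZZ (VV P) | x (Sum.inr (⟨c, b, none⟩, ⟨c, b, some 0⟩)) ≠ 0},
      (isOpen_coord _).preimage continuous_subtype_val, ?_, ?_⟩
    · change gg _ _ _ _ ≠ 0
      rw [gg_mid]
      have hn : (0 : ℚ) ≤ n := Nat.cast_nonneg n
      have h0 : s n ≠ 0 := by
        simp only [s]; positivity
      have h1 : s n ≠ 1 := by
        simp only [s]
        intro h
        rw [div_eq_one_iff_eq (by positivity)] at h
        linarith
      refine mul_ne_zero (by exact_mod_cast h0) (sub_ne_zero.2 ?_)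
      exact_mod_cast (Ne.symm h1)
    · refine (countable_range G).mono ?_
      rintro ⟨x, u, v, p, hp, rfl⟩ hx
      obtain ⟨rfl, rfl, -⟩ := gg_inr_ne hx
      obtain ⟨q, rfl⟩ := hDD p hp
      exact ⟨q, rfl⟩

lemma not_good {S : Set (P × Bool)} {c : P × Bool} (hc : c ∈ S) (h2 : c.2 = false) (b : BB P) :
    ¬ Good (⟨_, vert_mem hc b⟩ : XD (DD S)) := by
  intro h
  obtain ⟨y, hyO, U, hU, hyU, hUc⟩ := mem_closure_iff.1 h
    (Subtype.val ⁻¹' {x : ZZ (VV P) | x (Sum.inl ⟨c, b, none⟩) ≠ 0})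
    ((isOpen_coord _).preimage continuous_subtype_val)
    (by change dl _ _ ≠ 0; simp [dl_apply])
  obtain ⟨x, u, v, p, hp, rfl⟩ := y
  have hcu : c = u.comp := comp_eq hp hyO
  have hne := DD_ne u v ⟨p, hp⟩
  have hD : ∀ z, z ∈ DD S u v := by
    intro z
    obtain ⟨g1, g2, g3, g4⟩ := hp
    refine ⟨g1, g2, g3, ?_⟩
    rcases g4 with g4 | ⟨g4, k, g5, g6 | ⟨-, g6, -⟩⟩
    · exact Or.inl g4
    · exact Or.inr ⟨g4, k, g5, Or.inl g6⟩
    · rw [← hcu, h2] at g6; simp at g6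
  let G : ℂ → XD (DD S) := fun z => ⟨gg u v z, _, _, z, hD z, rfl⟩
  have hGc : Continuous G := (continuous_gg _ _).subtype_mk _
  have hGi : Function.Injective G := fun z z' h => gg_injective hne (congrArg Subtype.val h)
  have hcount : (G ⁻¹' U).Countable := hUc.preimage hGi
  have hdense : Dense (G ⁻¹' U)ᶜ := hcount.dense_compl ℝ
  obtain ⟨z, hz1, hz2⟩ := hdense.inter_open_nonempty _ (hU.preimage hGc) ⟨p, hyU⟩
  exact hz2 hz1

lemma mk_EE_le {α : Cardinal.{u}} (hα : ℵ₀ ≤ α) (hP : #P ≤ α) : #(EE P) ≤ α := by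
  have hW : #(WithTop P) ≤ α := by
    change #(Option P) ≤ α
    rw [Cardinal.mk_option]
    exact Cardinal.add_le_of_le hα hP (Cardinal.one_le_aleph0.trans hα)
  let f : EE P → (WithTop P × WithTop P) × (ℕ ⊕ Fin 3)
    | .lt z => (z.1, Sum.inr 0)
    | .lad0 l => ((l.1, l.1), Sum.inr 1)
    | .lads l n => ((l.1, l.1), Sum.inl n)
    | .mark => ((⊤, ⊤), Sum.inr 2)
  have hf : Function.Injective f := by
    rintro (z | l | ⟨l, n⟩ | _) (z' | l' | ⟨l', n'⟩ | _) h <;> simp [f] at h ⊢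
    · exact Subtype.ext h
    · exact Subtype.ext h
    · exact ⟨Subtype.ext h.1, h.2⟩
  have h1 := Cardinal.mk_le_of_injective hf
  refine h1.trans ?_
  rw [Cardinal.mk_prod, Cardinal.mk_prod]
  simp only [Cardinal.lift_id, Cardinal.lift_uzero]
  refine Cardinal.mul_le_of_le hα (Cardinal.mul_le_of_le hα hW hW) ?_
  rw [Cardinal.lift_le_aleph0.2 Cardinal.mk_le_aleph0 |>.antisymm (by simp)]
  exact hα

lemma mk_VV_le {α : Cardinal.{u}} (hα : Cardinal.continuum ≤ α) (hP : #P ≤ α) : #(VV P) ≤ α := by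
  have hα0 : ℵ₀ ≤ α := Cardinal.aleph0_le_continuum.trans hα
  have hE := mk_EE_le hα0 hP
  have hW : #(WithTop P) ≤ α := by
    change #(Option P) ≤ α
    rw [Cardinal.mk_option]
    exact Cardinal.add_le_of_le hα0 hP (Cardinal.one_le_aleph0.trans hα0)
  let f : VV P → (P × Bool) × BB P × Option ℝ := fun v => (v.comp, v.base, v.leaf)
  have hf : Function.Injective f := by
    intro v w h
    simp only [f, Prod.mk.injEq] at h
    exact VV.ext h.1 h.2.1 h.2.2
  refine (Cardinal.mk_le_of_injective hf).trans ?_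
  simp only [Cardinal.mk_prod, Cardinal.mk_sum, Cardinal.lift_id, Cardinal.lift_uzero]
  refine Cardinal.mul_le_of_le hα0 (Cardinal.mul_le_of_le hα0 hP ?_) (Cardinal.mul_le_of_le hα0
    (Cardinal.add_le_of_le hα0 hW (Cardinal.mul_le_of_le hα0 hE ?_)) ?_)
  · exact (Cardinal.lift_le_aleph0.2 Cardinal.mk_le_aleph0).trans hα0
  · exact (Cardinal.lift_le_aleph0.2 Cardinal.mk_le_aleph0).trans hα0
  · rw [Cardinal.mk_option, Cardinal.mk_real]
    simpa using Cardinal.add_le_of_le hα0 hα (Cardinal.one_le_aleph0.trans hα0)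

lemma mk_XX {α : Cardinal.{u}} (hα : Cardinal.continuum ≤ α) (hP : #P = α) : #(XX P) = α := by
  have hα0 : ℵ₀ ≤ α := Cardinal.aleph0_le_continuum.trans hα
  apply le_antisymm
  · have hV := mk_VV_le hα hP.le
    have hsub : XX P ⊆ range (fun z : VV P × VV P × ℂ => gg z.1 z.2.1 z.2.2) := by
      rintro _ ⟨u, v, p, -, rfl⟩
      exact ⟨(u, v, p), rfl⟩
    refine (Cardinal.mk_le_mk_of_subset hsub).trans (Cardinal.mk_range_le.trans ?_)
    simp only [Cardinal.mk_prod, Cardinal.lift_id, Cardinal.lift_uzero]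
    refine Cardinal.mul_le_of_le hα0 hV (Cardinal.mul_le_of_le hα0 hV ?_)
    rw [Cardinal.mk_complex]
    simpa using hα
  · rw [← hP]
    refine Cardinal.mk_le_of_injective
      (f := fun p : P => (⟨_, vert_mem (mem_univ (p, false)) (.inl ⊤)⟩ : XX P)) ?_
    intro p p' h
    have := dl_inj (congrArg Subtype.val h)
    simpa using this

open Classical in
/-- Swap of flavours. -/
noncomputable def tau (a b : P) (c : P × Bool) : P × Bool :=
  if c.1 = a ∨ c.1 = b then (c.1, !c.2) else c

lemma tau_fst (a b : P) (c : P × Bool) : (tau a b c).1 = c.1 := by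
  unfold tau; split_ifs <;> rfl

lemma tau_tau (a b : P) (c : P × Bool) : tau a b (tau a b c) = c := by
  by_cases h : c.1 = a ∨ c.1 = b
  · simp [tau, h]
  · simp [tau, h]

/-- The vertex permutation. -/
noncomputable def sig (a b : P) : Equiv.Perm (VV P) where
  toFun v := ⟨tau a b v.comp, v.base, v.leaf.map (· + 1)⟩
  invFun v := ⟨tau a b v.comp, v.base, v.leaf.map (· - 1)⟩
  left_inv v := by
    rcases v with ⟨c, b, _ | k⟩ <;> simp [tau_tau]
  right_inv v := by
    rcases v with ⟨c, b, _ | k⟩ <;> simp [tau_tau]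

lemma sig_sub {S S' : Set (P × Bool)} (a b : P) (h : ∀ c ∈ S, tau a b c ∈ S') (u v : VV P) :
    DD S u v ⊆ DD S' (sig a b u) (sig a b v) := by
  rintro z ⟨h1, h2, h3, h4⟩
  refine ⟨h _ h1, congrArg (tau a b) h2, ?_, ?_⟩
  · change u.leaf.map _ = none
    rw [h3]; rfl
  · rcases h4 with ⟨h4, h5⟩ | ⟨h4, k, h5, h6⟩
    · left
      constructor
      · change v.leaf.map _ = none
        rw [h4]; rfl
      · change Adj (tau a b u.comp).1 u.base v.base
        rw [tau_fst]; exact h5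
    · right
      refine ⟨h4, k + 1, ?_, ?_⟩
      · change v.leaf.map _ = _
        rw [h5]; rfl
      · left
        rcases h6 with h6 | ⟨rfl, -⟩ <;> linarith

/-- Components representing an element of a quasiorder. -/
def SQ {Q : Type u} (le : Q → Q → Prop) (ι : Q → P) (q : Q) : Set (P × Bool) :=
  {c | ∃ r, le r q ∧ c.1 = ι r ∧ (c.2 = true ↔ r = q)}

lemma tau_mem {Q : Type u} {le : Q → Q → Prop} (htrans : ∀ a b c, le a b → le b c → le a c)
    {ι : Q → P} (hι : Function.Injective ι) {q q' : Q} (hq : le q q') (hne : q ≠ q')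
    (c : P × Bool) (hc : c ∈ SQ le ι q) : tau (ι q) (ι q') c ∈ SQ le ι q' := by
  obtain ⟨r, h1, h2, h3⟩ := hc
  refine ⟨r, htrans _ _ _ h1 hq, by rw [tau_fst, h2], ?_⟩
  obtain ⟨p, t⟩ := c
  dsimp only at h2 h3
  subst h2
  by_cases e1 : r = q
  · subst e1
    have : t = true := h3.2 rfl
    simp [tau, this, hne]
  · have ht : t = false := by simpa [e1] using h3
    by_cases e2 : r = q'
    · simp [tau, e2, ht]
    · simp [tau, hι.eq_iff, e1, e2, ht]

theorem represents [WellFoundedLT P] {α : Cardinal.{u}} (hP : #P = α) :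
    RepresentsByEmb α (XX P) := by
  intro Q le hQ hrefl htrans
  rw [← hP] at hQ
  obtain ⟨⟨ι, hι⟩⟩ := (Cardinal.le_def Q P).1 hQ
  have hmem : ∀ q, (ι q, true) ∈ SQ le ι q := fun q => ⟨q, hrefl q, rfl, by simp⟩
  refine ⟨fun q => XS (SQ le ι q), fun q => isClopen_XS _, ?_, ?_⟩
  · intro q q' hne
    constructor
    intro e
    let e' : XD (DD (SQ le ι q)) ≃ₜ XD (DD (SQ le ι q')) := ((flat _).symm.trans e).trans (flat _)
    obtain ⟨c', hc', h1, h2⟩ := emb_rigid (S' := SQ le ι q')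
      (IsEmbedding.subtypeVal.comp e'.isEmbedding) (fun x => (e' x).2) (hmem q)
    have hg := (good_true (hmem q) rfl (.inl ⊤)).map e'
    have h3 : e' ⟨_, vert_mem (hmem q) (.inl ⊤)⟩ = ⟨_, vert_mem hc' (.inl ⊤)⟩ := Subtype.ext h2
    rw [h3] at hg
    refine not_good hc' ?_ _ hg
    obtain ⟨r, -, g2, g3⟩ := hc'
    have : q = r := hι (h1.symm.trans g2)
    subst this
    simpa [hne] using g3
  · intro q q'
    rw [homeoToSubspace_iff]
    constructor
    · intro hq
      by_cases hne : q = q'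
      · subst hne
        exact ⟨id, IsEmbedding.id⟩
      · obtain ⟨f, hf⟩ := exists_emb (D := DD (SQ le ι q)) (D' := DD (SQ le ι q'))
          (sig (ι q) (ι q')) (sig_sub _ _ (tau_mem htrans hι hq hne))
        exact ⟨_, ((flat _).symm.isEmbedding.comp hf).comp (flat _).isEmbedding⟩
    · rintro ⟨f, hf⟩
      have hf' := ((flat _).isEmbedding.comp hf).comp (flat _).symm.isEmbedding
      obtain ⟨c', ⟨r, g1, g2, -⟩, h1, -⟩ := emb_rigid (S' := SQ le ι q')
        (IsEmbedding.subtypeVal.comp hf') (fun x => Subtype.prop _) (hmem q)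
      have : q = r := hι (h1.symm.trans g2)
      subst this
      exact g1

end Space

end QRep

theorem statement5 (α : Cardinal.{u}) (hα : Cardinal.continuum ≤ α) :
    ∃ (X : Type u) (tX : TopologicalSpace X),
      @TopologicalSpace.MetrizableSpace X tX ∧ #X = α ∧
      @RepresentsByEmb α X tX := by
  have hP : #(α.ord.ToType) = α := by simp
  exact ⟨QRep.XX α.ord.ToType, inferInstance, inferInstance, QRep.mk_XX hα hP, QRep.represents hP⟩
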